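/- arXiv:2602.23151 — 7 statements merged into one kernel-verified Lean document; each statement's English description precedes it below -/
import Mathlib

section
/- Let d ≥ 1 and N ≥ 2 be integers and let B be a real d×d matrix with operator norm ‖B‖ ≤ 1/2. Then det(I_d + B) > 0 and |log det(I_d + B) − Σ_{k=1}^{N−1} ((−1)^{k+1}/k)·tr(B^k)| ≤ 2·d·‖B‖^{N}. -/
open MeasureTheory Real

noncomputable section

open Polynomial in
theorem det_aeval_aux {d : ℕ} (A : Matrix (Fin d) (Fin d) ℂ) (q : ℂ[X]) :
    (aeval A q).det = (A.charpoly.roots.map (fun z => q.eval z)).prod := by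
  have hcard : A.charpoly.roots.card = d := by
    have := (IsAlgClosed.splits A.charpoly).natDegree_eq_card_roots
    rw [← this]; simp
  have hlin : ∀ a : ℂ, (aeval A (X - C a)).det
      = (A.charpoly.roots.map (fun z => (X - C a : ℂ[X]).eval z)).prod := by
    intro a
    have h1 : A.charpoly.eval a = (A.charpoly.roots.map (fun z => a - z)).prod := by
      conv_lhs => rw [(IsAlgClosed.splits A.charpoly).eq_prod_roots_of_monic A.charpoly_monic]
      rw [eval_multiset_prod, Multiset.map_map]; simp
    have h2 : aeval A (X - C a) = -(Matrix.scalar (Fin d) a - A) := by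
      simp [Algebra.algebraMap_eq_smul_one, Matrix.scalar_apply, ← Matrix.smul_one_eq_diagonal]
    rw [h2, Matrix.det_neg, ← Matrix.eval_charpoly, h1]
    have : (fun z => (X - C a : ℂ[X]).eval z) = fun z : ℂ => (-1) * (a - z) := by
      ext z; simp
    rw [this, Multiset.prod_map_mul]
    simp [hcard]
  have hprod : ∀ s : Multiset ℂ, (aeval A (s.map (fun a => X - C a)).prod).det
      = (A.charpoly.roots.map (fun z => ((s.map (fun a => X - C a)).prod : ℂ[X]).eval z)).prod := by
    intro s
    induction s using Multiset.induction_on with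
    | empty => simp
    | cons a s ih =>
      simp only [Multiset.map_cons, Multiset.prod_cons, map_mul, Matrix.det_mul, eval_mul,
        Multiset.prod_map_mul]
      rw [ih, hlin]
  have hq := (IsAlgClosed.splits q).eq_prod_roots
  rw [hq]
  simp only [map_mul, Matrix.det_mul, eval_mul, Multiset.prod_map_mul]
  rw [hprod]
  congr 1
  simp [hcard, Algebra.algebraMap_eq_smul_one]

theorem eig_bound {d : ℕ} (B : Matrix (Fin d) (Fin d) ℝ) (nB : ℝ) (h0 : 0 ≤ nB)
    (hB : ∀ v : EuclideanSpace ℝ (Fin d), ‖Matrix.toEuclideanLin B v‖ ≤ nB * ‖v‖) (z : ℂ)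
    (hz : z ∈ (B.map (algebraMap ℝ ℂ)).charpoly.roots) : ‖z‖ ≤ nB := by
  have h1 := (Polynomial.mem_roots'.1 hz).2
  have h2 : (Matrix.scalar (Fin d) z - B.map (algebraMap ℝ ℂ)).det = 0 := by
    rw [← Matrix.eval_charpoly]; exact h1
  obtain ⟨w, hw, hw2⟩ := Matrix.exists_mulVec_eq_zero_iff.2 h2
  have h3 : ∀ i, z * w i = ∑ j, (B i j : ℂ) * w j := by
    intro i
    have := congrFun hw2 i
    rw [Matrix.sub_mulVec] at this
    simp [Matrix.mulVec, dotProduct] at this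
    linear_combination this
  have hsq : ∀ v : Fin d → ℝ, ∑ i, (∑ j, B i j * v j) ^ 2 ≤ nB ^ 2 * ∑ i, v i ^ 2 := by
    intro v
    have := hB (WithLp.toLp 2 v)
    have h := pow_le_pow_left₀ (norm_nonneg _) this 2
    rw [mul_pow, EuclideanSpace.real_norm_sq_eq, EuclideanSpace.real_norm_sq_eq] at h
    simpa [Matrix.mulVec, dotProduct] using h
  have hre := hsq (fun i => (w i).re)
  have him := hsq (fun i => (w i).im)
  have e1 : ∀ i, (∑ j, B i j * (w j).re) = (z * w i).re := by
    intro i; rw [h3]; simp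
  have e2 : ∀ i, (∑ j, B i j * (w j).im) = (z * w i).im := by
    intro i; rw [h3]; simp
  simp only [e1, e2] at hre him
  have hS : ∀ u : Fin d → ℂ, ∑ i, ‖u i‖ ^ 2 = ∑ i, (u i).re ^ 2 + ∑ i, (u i).im ^ 2 := by
    intro u; rw [← Finset.sum_add_distrib]
    refine Finset.sum_congr rfl fun i _ => ?_
    rw [Complex.sq_norm, Complex.normSq_apply]; ring
  have hpos : 0 < ∑ i, ‖w i‖ ^ 2 := by
    obtain ⟨i, hi⟩ := Function.ne_iff.1 hw
    refine Finset.sum_pos' (fun _ _ => by positivity) ⟨i, Finset.mem_univ _, ?_⟩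
    have : 0 < ‖w i‖ := norm_pos_iff.2 hi
    positivity
  have hz2 : ‖z‖ ^ 2 * ∑ i, ‖w i‖ ^ 2 ≤ nB ^ 2 * ∑ i, ‖w i‖ ^ 2 := by
    have : ‖z‖ ^ 2 * ∑ i, ‖w i‖ ^ 2 = ∑ i, ‖z * w i‖ ^ 2 := by
      rw [Finset.mul_sum]; simp [mul_pow]
    rw [this, hS, hS]; linarith
  exact abs_le_of_sq_le_sq' (le_of_mul_le_mul_right hz2 hpos) h0 |>.2

theorem trace_pow_aux {d : ℕ} (A : Matrix (Fin d) (Fin d) ℂ) (k : ℕ) :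
    (A ^ k).trace = (A.charpoly.roots.map (fun z => z ^ k)).sum := by
  have : (A ^ k).charpoly = ((A.charpoly.roots.map (fun z => z ^ k)).map
      (fun a => Polynomial.X - Polynomial.C a)).prod := by
    refine Polynomial.funext fun a => ?_
    have h := det_aeval_aux A (Polynomial.C a - Polynomial.X ^ k)
    rw [Polynomial.eval_multiset_prod, Matrix.eval_charpoly, Multiset.map_map, Multiset.map_map]
    have e1 : Matrix.scalar (Fin d) a - A ^ k
        = Polynomial.aeval A (Polynomial.C a - Polynomial.X ^ k) := by
      simp [Algebra.algebraMap_eq_smul_one, Matrix.scalar_apply, ← Matrix.smul_one_eq_diagonal]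
    rw [e1, h]
    congr 1
    refine Multiset.map_congr rfl fun z _ => ?_
    simp
  rw [Matrix.trace_eq_sum_roots_charpoly, this, Polynomial.roots_multiset_prod_X_sub_C]

theorem det_eq_aux {d : ℕ} (B : Matrix (Fin d) (Fin d) ℝ) :
    (((1 + B).det : ℝ) : ℂ)
      = ((B.map (algebraMap ℝ ℂ)).charpoly.roots.map (fun z => 1 + z)).prod := by
  have h := det_aeval_aux (B.map (algebraMap ℝ ℂ)) (1 + Polynomial.X)
  simp only [map_add, map_one, Polynomial.aeval_X, Polynomial.eval_add, Polynomial.eval_one,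
    Polynomial.eval_X] at h
  rw [← h]
  have := RingHom.map_det (algebraMap ℝ ℂ) (1 + B)
  rw [map_add, map_one] at this
  exact this

theorem det_ne_aux {d : ℕ} (B : Matrix (Fin d) (Fin d) ℝ)
    (hB : ∀ v : EuclideanSpace ℝ (Fin d), ‖Matrix.toEuclideanLin B v‖ ≤ (1 / 2) * ‖v‖) :
    (1 + B).det ≠ 0 := by
  intro h
  have h1 := det_eq_aux B
  rw [h, Complex.ofReal_zero, eq_comm, Multiset.prod_eq_zero_iff, Multiset.mem_map] at h1
  obtain ⟨z, hz, hz0⟩ := h1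
  have h2 := eig_bound B (1 / 2) (by norm_num) hB z hz
  have h3 : z = -1 := by linear_combination hz0
  rw [h3] at h2
  norm_num at h2

theorem det_pos_aux {d : ℕ} (B : Matrix (Fin d) (Fin d) ℝ)
    (hB : ∀ v : EuclideanSpace ℝ (Fin d), ‖Matrix.toEuclideanLin B v‖ ≤ (1 / 2) * ‖v‖) :
    0 < (1 + B).det := by
  by_contra hneg
  push Not at hneg
  have hc : Continuous fun t : ℝ => (1 + t • B).det := by fun_prop
  have := intermediate_value_Icc' (zero_le_one' ℝ) hc.continuousOn
  obtain ⟨t, ht, ht0⟩ := this (a := 0) ⟨by simpa using hneg, by simp⟩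
  refine det_ne_aux (t • B) (fun v => ?_) ht0
  rw [map_smul, LinearMap.smul_apply, norm_smul, Real.norm_eq_abs, abs_of_nonneg ht.1]
  calc _ ≤ 1 * ‖Matrix.toEuclideanLin B v‖ := by gcongr; exact ht.2
    _ ≤ _ := by rw [one_mul]; exact hB v

theorem log_bound_aux (N : ℕ) (hN : 2 ≤ N) (r : ℝ) (hr : r ≤ 1 / 2) (z : ℂ) (hz : ‖z‖ ≤ r) :
    |Real.log ‖1 + z‖ - (∑ k ∈ Finset.Icc 1 (N - 1), (-1 : ℂ) ^ (k + 1) / k * z ^ k).re|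
      ≤ 2 * r ^ N := by
  obtain ⟨n, rfl⟩ : ∃ n, N = n + 1 := ⟨N - 1, by omega⟩
  have h := Complex.norm_log_sub_logTaylor_le n (z := z) (by linarith)
  have e : Complex.logTaylor (n + 1) z
      = ∑ k ∈ Finset.Icc 1 (n + 1 - 1), (-1 : ℂ) ^ (k + 1) / k * z ^ k := by
    rw [Complex.logTaylor, Finset.sum_range_succ', Nat.add_sub_cancel,
      ← Finset.Ico_add_one_right_eq_Icc, Finset.sum_Ico_eq_sum_range]
    simp only [Nat.add_sub_cancel, Nat.cast_zero, div_zero, add_zero]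
    refine Finset.sum_congr rfl fun k _ => ?_
    rw [add_comm 1 k]; ring
  rw [e] at h
  have h2 := (Complex.abs_re_le_norm _).trans h
  rw [Complex.sub_re, Complex.log_re] at h2
  refine h2.trans ?_
  have hr0 : 0 ≤ r := (norm_nonneg z).trans hz
  have hi : (1 - ‖z‖)⁻¹ ≤ 2 := by
    rw [inv_le_comm₀ (by linarith) (by norm_num)]; linarith
  have hi0 : 0 ≤ (1 - ‖z‖)⁻¹ := inv_nonneg.2 (by linarith)
  calc _ ≤ ‖z‖ ^ (n + 1) * (1 - ‖z‖)⁻¹ :=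
        div_le_self (by positivity) (by linarith [(Nat.cast_nonneg n : (0 : ℝ) ≤ n)])
    _ ≤ r ^ (n + 1) * 2 := by gcongr
    _ = _ := by ring

theorem sum_bound_aux (s : Multiset ℂ) (f : ℂ → ℝ) (c : ℝ) (h : ∀ z ∈ s, |f z| ≤ c) :
    |(s.map f).sum| ≤ s.card * c := by
  induction s using Multiset.induction_on with
  | empty => simp
  | cons a s ih =>
    rw [Multiset.map_cons, Multiset.sum_cons, Multiset.card_cons]
    push_cast
    have h1 := h a (Multiset.mem_cons_self a s)
    have h2 := ih fun z hz => h z (Multiset.mem_cons_of_mem hz)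
    linarith [abs_add_le (f a) (s.map f).sum]

theorem log_prod_aux (s : Multiset ℂ) (h : ∀ z ∈ s, 1 + z ≠ 0) :
    Real.log ‖(s.map (fun z => 1 + z)).prod‖ = (s.map (fun z => Real.log ‖1 + z‖)).sum := by
  induction s using Multiset.induction_on with
  | empty => simp
  | cons a s ih =>
    have h2 := ih fun z hz => h z (Multiset.mem_cons_of_mem hz)
    have h3 : (s.map (fun z => 1 + z)).prod ≠ 0 := by
      rw [Ne, Multiset.prod_eq_zero_iff, Multiset.mem_map]
      rintro ⟨z, hz, hz0⟩
      exact h z (Multiset.mem_cons_of_mem hz) hz0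
    rw [Multiset.map_cons, Multiset.prod_cons, Multiset.map_cons, Multiset.sum_cons, norm_mul,
      Real.log_mul (norm_ne_zero_iff.2 (h a (Multiset.mem_cons_self a s)))
        (norm_ne_zero_iff.2 h3), h2]

/-- **Log-determinant expansion.** Let `B` be a real `d × d` matrix whose operator norm
(with respect to the Euclidean norm on `ℝ^d`) is at most `nB ≤ 1/2`.  Then
`det (I + B) > 0` and
`|log det (I + B) − Σ_{k=1}^{N−1} ((−1)^{k+1}/k)·tr(B^k)| ≤ 2 d nB^N`. -/
theorem logdet_expansion (d N : ℕ) (hd : 1 ≤ d) (hN : 2 ≤ N)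
    (B : Matrix (Fin d) (Fin d) ℝ) (nB : ℝ)
    (hB : ∀ v : EuclideanSpace ℝ (Fin d), ‖Matrix.toEuclideanLin B v‖ ≤ nB * ‖v‖)
    (hnB : nB ≤ 1 / 2) :
    0 < (1 + B).det ∧
      |Real.log (1 + B).det -
          ∑ k ∈ Finset.Icc 1 (N - 1), (-1 : ℝ) ^ (k + 1) / k * Matrix.trace (B ^ k)| ≤
        2 * d * nB ^ N := by
  have h0 : 0 ≤ nB := by
    have h := (norm_nonneg _).trans (hB (EuclideanSpace.single ⟨0, hd⟩ 1))
    simpa using h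
  have hB2 : ∀ v : EuclideanSpace ℝ (Fin d),
      ‖Matrix.toEuclideanLin B v‖ ≤ (1 / 2) * ‖v‖ := fun v =>
    (hB v).trans (by gcongr)
  have hpos := det_pos_aux B hB2
  refine ⟨hpos, ?_⟩
  set A := B.map (algebraMap ℝ ℂ) with hA
  have hcard : A.charpoly.roots.card = d := by
    rw [← (IsAlgClosed.splits A.charpoly).natDegree_eq_card_roots]; simp
  have heig : ∀ z ∈ A.charpoly.roots, ‖z‖ ≤ nB := fun z hz => eig_bound B nB h0 hB z hz
  have hne : ∀ z ∈ A.charpoly.roots, 1 + z ≠ 0 := by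
    intro z hz hz0
    have h2 := heig z hz
    have h3 : z = -1 := by linear_combination hz0
    rw [h3, norm_neg, norm_one] at h2
    linarith
  have hlog : Real.log (1 + B).det
      = (A.charpoly.roots.map (fun z => Real.log ‖1 + z‖)).sum := by
    rw [← log_prod_aux _ hne, ← det_eq_aux B, Complex.norm_real, Real.norm_eq_abs, Real.log_abs]
  have htr : ∀ k : ℕ, ((Matrix.trace (B ^ k) : ℝ) : ℂ)
      = (A.charpoly.roots.map (fun z => z ^ k)).sum := by
    intro k
    rw [← trace_pow_aux, hA, ← Matrix.map_pow]
    simp [Matrix.trace]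
  have hsum : ∑ k ∈ Finset.Icc 1 (N - 1), (-1 : ℝ) ^ (k + 1) / k * Matrix.trace (B ^ k)
      = (A.charpoly.roots.map (fun z =>
        (∑ k ∈ Finset.Icc 1 (N - 1), (-1 : ℂ) ^ (k + 1) / k * z ^ k).re)).sum := by
    have hc : ((∑ k ∈ Finset.Icc 1 (N - 1),
        (-1 : ℝ) ^ (k + 1) / k * Matrix.trace (B ^ k) : ℝ) : ℂ)
        = (A.charpoly.roots.map (fun z =>
          ∑ k ∈ Finset.Icc 1 (N - 1), (-1 : ℂ) ^ (k + 1) / k * z ^ k)).sum := by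
      rw [Multiset.sum_map_sum]
      push_cast
      refine Finset.sum_congr rfl fun k _ => ?_
      rw [htr, Multiset.sum_map_mul_left]
    have := congrArg Complex.reAddGroupHom hc
    rw [map_multiset_sum, Multiset.map_map] at this
    exact (Complex.ofReal_re _).symm.trans this
  rw [hlog, hsum, ← Multiset.sum_map_sub]
  refine (sum_bound_aux _ _ (2 * nB ^ N) fun z hz =>
    log_bound_aux N hN nB hnB z (heig z hz)).trans ?_
  rw [hcard]
  exact le_of_eq (by ring)
end
end

section
/- Let d ≥ 2 be an integer, λ > 0, μ ≥ 1, r > 0, and suppose λ·μ·r² ≥ 4d. Let f, g : ℝ^d → ℝ be measurable with g(x) ≥ 4/5 and f(x) ≤ μ·‖x‖²/2 for all ‖x‖ ≤ r. Then (λ/(2π))^{d/2} ∫_{‖x‖ ≤ r} g(x)·e^{−λ f(x)} dx ≥ (1/2)·μ^{−d/2}. -/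
open MeasureTheory Real

noncomputable section

theorem gauss_int (d : ℕ) (b : ℝ) (hb : 0 < b) :
    Integrable (fun x : EuclideanSpace ℝ (Fin d) => Real.exp (-b * ‖x‖ ^ 2)) ∧
    ∫ x : EuclideanSpace ℝ (Fin d), Real.exp (-b * ‖x‖ ^ 2) = (π / b) ^ ((d : ℝ) / 2) := by
  have h : ∫ x : EuclideanSpace ℝ (Fin d), Real.exp (-b * ‖x‖ ^ 2) = (π / b) ^ ((d : ℝ) / 2) := by
    have := GaussianFourier.integral_rexp_neg_mul_sq_norm (V := EuclideanSpace ℝ (Fin d)) hb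
    simpa using this
  refine ⟨?_, h⟩
  apply Integrable.of_integral_ne_zero
  rw [h]
  positivity

theorem tail_num (d : ℕ) (hd : 2 ≤ d) :
    (2 : ℝ) ^ ((d : ℝ) / 2) * Real.exp (-(d : ℝ)) ≤ 3 / 8 := by
  have h1 : (2 : ℝ) ^ ((d : ℝ) / 2) * Real.exp (-(d : ℝ))
      = Real.exp (-((d : ℝ) * (1 - Real.log 2 / 2))) := by
    rw [Real.rpow_def_of_pos (by norm_num), ← Real.exp_add]
    congr 1; ring
  have hd' : (2 : ℝ) ≤ d := by exact_mod_cast hd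
  have hl := Real.log_two_lt_d9
  have h2 : (1.3 : ℝ) ≤ (d : ℝ) * (1 - Real.log 2 / 2) := by nlinarith
  rw [h1, Real.exp_neg]
  have h3 : (8 / 3 : ℝ) ≤ Real.exp ((d : ℝ) * (1 - Real.log 2 / 2)) := by
    have he := Real.exp_one_gt_d9
    have : Real.exp 1 ≤ Real.exp ((d : ℝ) * (1 - Real.log 2 / 2)) :=
      Real.exp_le_exp.2 (by linarith)
    linarith
  calc _ ≤ (8 / 3 : ℝ)⁻¹ := inv_anti₀ (by norm_num) h3
    _ = _ := by norm_num

theorem ball_gauss (d : ℕ) (hd : 2 ≤ d) (a r : ℝ) (ha : 0 < a) (hr : 0 < r)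
    (hbig : 4 * d ≤ a * r ^ 2) :
    5 / 8 * (2 * π / a) ^ ((d : ℝ) / 2) ≤
      ∫ x in Metric.closedBall (0 : EuclideanSpace ℝ (Fin d)) r,
        Real.exp (-(a / 2) * ‖x‖ ^ 2) := by
  obtain ⟨i1, e1⟩ := gauss_int d (a / 2) (by positivity)
  obtain ⟨i2, e2⟩ := gauss_int d (a / 4) (by positivity)
  rw [← integral_indicator Metric.isClosed_closedBall.measurableSet]
  have key : ∫ x : EuclideanSpace ℝ (Fin d), (Real.exp (-(a / 2) * ‖x‖ ^ 2)
      - Real.exp (-(d : ℝ)) * Real.exp (-(a / 4) * ‖x‖ ^ 2)) ≤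
      ∫ x, (Metric.closedBall (0 : EuclideanSpace ℝ (Fin d)) r).indicator
        (fun x => Real.exp (-(a / 2) * ‖x‖ ^ 2)) x := by
    apply integral_mono (i1.sub (i2.const_mul _))
      (i1.indicator Metric.isClosed_closedBall.measurableSet)
    intro x
    by_cases hx : x ∈ Metric.closedBall (0 : EuclideanSpace ℝ (Fin d)) r
    · simp only [Set.indicator_of_mem hx, Pi.sub_apply]
      have : 0 ≤ Real.exp (-(d : ℝ)) * Real.exp (-(a / 4) * ‖x‖ ^ 2) := by positivity
      linarith
    · simp only [Set.indicator_of_notMem hx, Pi.sub_apply]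
      rw [sub_nonpos, ← Real.exp_add]
      apply Real.exp_le_exp.2
      have hx' : r < ‖x‖ := by simpa using hx
      have : r ^ 2 ≤ ‖x‖ ^ 2 := by gcongr
      nlinarith
  refine le_trans ?_ key
  rw [integral_sub i1 (i2.const_mul _), integral_const_mul, e1, e2]
  have h1 : π / (a / 2) = 2 * π / a := by field_simp
  have h2 : π / (a / 4) = 2 * (2 * π / a) := by field_simp; norm_num
  rw [h1, h2, Real.mul_rpow (by norm_num) (by positivity)]
  have := tail_num d hd
  have hp : 0 < (2 * π / a) ^ ((d : ℝ) / 2) := by positivity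
  nlinarith

/-- **Lower bound on a local Laplace integral.** If `g ≥ 4/5` and `f ≤ μ‖x‖²/2` on the ball
of radius `r`, and `λμr² ≥ 4d`, then
`(λ/(2π))^{d/2} ∫_{‖x‖≤r} g(x) e^{−λ f(x)} dx ≥ (1/2) μ^{−d/2}`.
(The integral of the nonnegative integrand is taken in the Lebesgue sense.) -/
theorem laplace_local_lower_bound (d : ℕ) (hd : 2 ≤ d) (lam μ r : ℝ)
    (hlam : 0 < lam) (hμ : 1 ≤ μ) (hr : 0 < r) (hbig : 4 * d ≤ lam * μ * r ^ 2)
    (f g : EuclideanSpace ℝ (Fin d) → ℝ) (hfm : Measurable f) (hgm : Measurable g)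
    (hg : ∀ x : EuclideanSpace ℝ (Fin d), ‖x‖ ≤ r → 4 / 5 ≤ g x)
    (hf : ∀ x : EuclideanSpace ℝ (Fin d), ‖x‖ ≤ r → f x ≤ μ * ‖x‖ ^ 2 / 2) :
    ENNReal.ofReal ((1 / 2) * μ ^ (-(d : ℝ) / 2)) ≤
      ENNReal.ofReal ((lam / (2 * π)) ^ ((d : ℝ) / 2)) *
        ∫⁻ x in Metric.closedBall (0 : EuclideanSpace ℝ (Fin d)) r,
          ENNReal.ofReal (g x * Real.exp (-(lam * f x))) := by
  have hμ0 : 0 < μ := by linarith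
  have ha : 0 < lam * μ := by positivity
  have hB := ball_gauss d hd (lam * μ) r ha hr hbig
  obtain ⟨i1, -⟩ := gauss_int d (lam * μ / 2) (by positivity)
  have hms : MeasurableSet (Metric.closedBall (0 : EuclideanSpace ℝ (Fin d)) r) :=
    Metric.isClosed_closedBall.measurableSet
  have hL : ENNReal.ofReal (∫ x in Metric.closedBall (0 : EuclideanSpace ℝ (Fin d)) r,
        4 / 5 * Real.exp (-(lam * μ / 2) * ‖x‖ ^ 2)) ≤
      ∫⁻ x in Metric.closedBall (0 : EuclideanSpace ℝ (Fin d)) r,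
          ENNReal.ofReal (g x * Real.exp (-(lam * f x))) := by
    rw [ofReal_integral_eq_lintegral_ofReal (i1.restrict.const_mul _)
      (Filter.Eventually.of_forall fun x => by positivity)]
    apply setLIntegral_mono' hms
    intro x hx
    have hx' : ‖x‖ ≤ r := by simpa using hx
    apply ENNReal.ofReal_le_ofReal
    have h1 := hg x hx'
    have h2 := hf x hx'
    have h3 : Real.exp (-(lam * μ / 2) * ‖x‖ ^ 2) ≤ Real.exp (-(lam * f x)) := by
      apply Real.exp_le_exp.2
      nlinarith [mul_le_mul_of_nonneg_left h2 hlam.le]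
    exact mul_le_mul h1 h3 (Real.exp_pos _).le (by linarith)
  refine le_trans ?_ (mul_le_mul_right hL _)
  rw [← ENNReal.ofReal_mul (by positivity), integral_const_mul]
  apply ENNReal.ofReal_le_ofReal
  have hmul : (lam / (2 * π)) ^ ((d : ℝ) / 2) * (2 * π / (lam * μ)) ^ ((d : ℝ) / 2)
      = μ ^ (-(d : ℝ) / 2) := by
    rw [← Real.mul_rpow (by positivity) (by positivity), neg_div, Real.rpow_neg hμ0.le,
      ← Real.inv_rpow hμ0.le]
    congr 1
    field_simp
  rw [← hmul]
  have hp : 0 < (lam / (2 * π)) ^ ((d : ℝ) / 2) := by positivity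
  nlinarith [mul_le_mul_of_nonneg_left hB hp.le]
end
end

section
/- Let d ≥ 1 be an integer, λ > 0, and let a be a real number with a ≥ 2d. Then (λ/(2π))^{d/2} ∫_{ℝ^d} (1 + ‖x‖)^{−a} dx ≤ 2·((4/e)·d·λ/a²)^{d/2}. -/
open MeasureTheory Real

noncomputable section

lemma ptb_integrable (n : ℕ) (a : ℝ) (h : (n : ℝ) + 1 < a) :
    IntegrableOn (fun y : ℝ => y ^ n * (1 + y) ^ (-a)) (Set.Ioi 0) := by
  have h1 : IntegrableOn (fun y : ℝ => (y + 1) ^ ((n : ℝ) - a)) (Set.Ioi 0) :=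
    integrableOn_add_rpow_Ioi_of_lt (by linarith) (by norm_num)
  refine Integrable.mono' h1 (Measurable.aestronglyMeasurable (by fun_prop)) ?_
  filter_upwards [ae_restrict_mem measurableSet_Ioi] with y hy
  have hy : 0 < y := hy
  rw [Real.norm_of_nonneg (by positivity), sub_eq_add_neg, Real.rpow_add (by linarith),
    Real.rpow_natCast, add_comm 1 y]
  gcongr
  linarith

lemma ptb_step (n : ℕ) (a : ℝ) (h : (n : ℝ) + 2 < a) :
    ∫ y in Set.Ioi (0 : ℝ), y ^ (n + 1) * (1 + y) ^ (-a) =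
      (n + 1) / (a - 1) * ∫ y in Set.Ioi (0 : ℝ), y ^ n * (1 + y) ^ (-(a - 1)) := by
  have hn : (0 : ℝ) ≤ n := Nat.cast_nonneg n
  have ha : a - 1 ≠ 0 := by linarith
  have hu : ∀ x ∈ Set.Ioi (0 : ℝ),
      HasDerivAt (fun y : ℝ => y ^ (n + 1)) ((n + 1 : ℝ) * x ^ n) x := by
    intro x _
    simpa using hasDerivAt_pow (n + 1) x
  have hv : ∀ x ∈ Set.Ioi (0 : ℝ),
      HasDerivAt (fun y : ℝ => -(1 / (a - 1)) * (1 + y) ^ (-(a - 1))) ((1 + x) ^ (-a)) x := by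
    intro x hx
    have hx : 0 < x := hx
    have h1 : HasDerivAt (fun y : ℝ => 1 + y) 1 x := (hasDerivAt_id x).const_add 1
    have h2 := (h1.rpow_const (p := -(a - 1)) (Or.inl (by linarith))).const_mul (-(1 / (a - 1)))
    refine h2.congr_deriv ?_
    rw [show -(a - 1) - 1 = -a by ring]
    field_simp
  have key := integral_Ioi_mul_deriv_eq_deriv_mul (a := (0 : ℝ)) (a' := (0 : ℝ)) (b' := (0 : ℝ)) hu hv
    ?_ ?_ ?_ ?_
  · rw [key, ← integral_const_mul, sub_self, zero_sub, ← integral_neg]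
    congr 1
    ext y
    field_simp
  · exact ptb_integrable (n + 1) a (by push_cast; linarith)
  · have := (ptb_integrable n (a - 1) (by linarith)).const_mul (-((n + 1 : ℝ) / (a - 1)))
    refine this.congr (Filter.Eventually.of_forall fun y => ?_)
    simp only [Pi.mul_apply]
    field_simp
  · have : ContinuousAt ((fun y : ℝ => y ^ (n + 1)) *
        fun y : ℝ => -(1 / (a - 1)) * (1 + y) ^ (-(a - 1))) 0 := by
      apply ContinuousAt.mul
      · fun_prop
      · refine ContinuousAt.mul continuousAt_const (ContinuousAt.rpow_const (by fun_prop) ?_)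
        left; norm_num
    have h3 := this.tendsto
    simp only [Pi.mul_apply, zero_pow (Nat.succ_ne_zero n), zero_mul] at h3
    exact h3.mono_left nhdsWithin_le_nhds
  · have h0 : Filter.Tendsto (fun y : ℝ => (1 / (a - 1)) * (1 + y) ^ (-(a - 1 - (n + 1))))
        Filter.atTop (nhds 0) := by
      have := (tendsto_rpow_neg_atTop (y := a - 1 - (n + 1)) (by linarith)).comp
        (Filter.tendsto_atTop_add_const_left Filter.atTop (1 : ℝ) Filter.tendsto_id)
      simpa using this.const_mul (1 / (a - 1))
    refine squeeze_zero_norm' ?_ h0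
    filter_upwards [Filter.eventually_gt_atTop 0] with y hy
    have ha' : 0 < a - 1 := by linarith
    have e : (1 + y) ^ (-(a - 1 - (n + 1))) = (1 + y) ^ (n + 1) * (1 + y) ^ (-(a - 1)) := by
      rw [← Real.rpow_natCast, ← Real.rpow_add (by linarith)]
      congr 1
      push_cast
      ring
    rw [e]
    simp only [Pi.mul_apply, norm_mul, norm_neg]
    rw [Real.norm_of_nonneg (by positivity), Real.norm_of_nonneg (by positivity),
      Real.norm_of_nonneg (by positivity)]
    have : y ^ (n + 1) ≤ (1 + y) ^ (n + 1) := by gcongr; linarith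
    have h4 : 0 ≤ 1 / (a - 1) * (1 + y) ^ (-(a - 1)) := by positivity
    nlinarith [mul_le_mul_of_nonneg_right this h4]

lemma ptb_bound (b : ℝ) (hb : 0 < b) (n : ℕ) : ∀ a : ℝ, b + n + 1 ≤ a →
    ∫ y in Set.Ioi (0 : ℝ), y ^ n * (1 + y) ^ (-a) ≤ n.factorial / b ^ (n + 1) := by
  induction n with
  | zero =>
    intro a ha
    have ha : b + 1 ≤ a := by simpa using ha
    have hd : ∀ x ∈ Set.Ici (0 : ℝ),
        HasDerivAt (fun y : ℝ => -(1 / (a - 1)) * (1 + y) ^ (-(a - 1))) ((1 + x) ^ (-a)) x := by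
      intro x hx
      have hx : 0 ≤ x := hx
      have h1 : HasDerivAt (fun y : ℝ => 1 + y) 1 x := (hasDerivAt_id x).const_add 1
      have h2 := (h1.rpow_const (p := -(a - 1)) (Or.inl (by linarith))).const_mul (-(1 / (a - 1)))
      refine h2.congr_deriv ?_
      rw [show -(a - 1) - 1 = -a by ring]
      have : a - 1 ≠ 0 := by linarith
      field_simp
    have hi := ptb_integrable 0 a (by simp; linarith)
    simp only [pow_zero, one_mul] at hi
    have h0 : Filter.Tendsto (fun y : ℝ => -(1 / (a - 1)) * (1 + y) ^ (-(a - 1)))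
        Filter.atTop (nhds 0) := by
      have := (tendsto_rpow_neg_atTop (y := a - 1) (by linarith)).comp
        (Filter.tendsto_atTop_add_const_left Filter.atTop (1 : ℝ) Filter.tendsto_id)
      simpa using this.const_mul (-(1 / (a - 1)))
    have := integral_Ioi_of_hasDerivAt_of_tendsto' hd hi h0
    simp only [pow_zero, one_mul, this]
    simp
    exact inv_anti₀ hb (by linarith)
  | succ n ih =>
    intro a ha
    push_cast at ha
    have hn : (0 : ℝ) ≤ n := Nat.cast_nonneg n
    rw [ptb_step n a (by linarith)]
    have h1 := ih (a - 1) (by linarith)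
    have h2 : ((n : ℝ) + 1) / (a - 1) ≤ (n + 1) / b := by
      gcongr
      linarith
    calc _ ≤ ((n : ℝ) + 1) / b * (n.factorial / b ^ (n + 1)) := by
          apply mul_le_mul h2 h1 _ (by positivity)
          apply setIntegral_nonneg measurableSet_Ioi
          intro y hy
          have hy : 0 < y := hy
          positivity
      _ = _ := by
          rw [Nat.factorial_succ]
          push_cast
          field_simp
          ring

/-- The inductive step inequality. -/
lemma ptb_log (x : ℝ) (hx : 0 < x) :
    log (x + 1 / 2) + (x * (log x - 1) - 1 / (8 * x)) ≤
      (x + 1) * (log (x + 1) - 1) - 1 / (8 * (x + 1)) := by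
  have h1 := le_log_one_add_of_nonneg (x := 1 / x) (by positivity)
  have h2 := le_log_one_add_of_nonneg (x := 1 / (2 * x + 1)) (by positivity)
  have e1 : log (1 + 1 / x) = log (x + 1) - log x := by
    rw [← log_div (by positivity) hx.ne']
    congr 1
    field_simp
  have e2 : log (1 + 1 / (2 * x + 1)) = log (x + 1) - log (x + 1 / 2) := by
    rw [← log_div (by positivity) (by positivity)]
    congr 1
    field_simp
    ring
  rw [e1] at h1
  rw [e2] at h2
  have f1 : 2 * (1 / x) / (1 / x + 2) = 2 / (2 * x + 1) := by
    field_simp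
    ring
  have f2 : 2 * (1 / (2 * x + 1)) / (1 / (2 * x + 1) + 2) = 2 / (4 * x + 3) := by
    field_simp
    ring
  rw [f1] at h1
  rw [f2] at h2
  have h3 := mul_le_mul_of_nonneg_left h1 hx.le
  have h4 : 1 - (1 / (8 * x) - 1 / (8 * (x + 1))) ≤ x * (2 / (2 * x + 1)) + 2 / (4 * x + 3) := by
    have : x * (2 / (2 * x + 1)) + 2 / (4 * x + 3) - (1 - (1 / (8 * x) - 1 / (8 * (x + 1))))
      = (2 * x + 3) / (8 * x * (x + 1) * (2 * x + 1) * (4 * x + 3)) := by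
      field_simp
      ring
    have : 0 ≤ (2 * x + 3) / (8 * x * (x + 1) * (2 * x + 1) * (4 * x + 3)) := by positivity
    linarith
  linarith

lemma ptb_gamma_step (x : ℝ) (hx : 0 < x)
    (h : Gamma (x + 1 / 2) ≤ 2 * √π * exp (x * (log x - 1) - 1 / (8 * x))) :
    Gamma (x + 1 + 1 / 2) ≤
      2 * √π * exp ((x + 1) * (log (x + 1) - 1) - 1 / (8 * (x + 1))) := by
  rw [show x + 1 + 1 / 2 = (x + 1 / 2) + 1 by ring, Gamma_add_one (by positivity)]
  have h1 : (0 : ℝ) < x + 1 / 2 := by positivity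
  calc _ ≤ (x + 1 / 2) * (2 * √π * exp (x * (log x - 1) - 1 / (8 * x))) := by gcongr
    _ = 2 * √π * exp (log (x + 1 / 2) + (x * (log x - 1) - 1 / (8 * x))) := by
        rw [exp_add, exp_log h1]
        ring
    _ ≤ _ := by
        gcongr
        exact ptb_log x hx

lemma ptb_gamma (n : ℕ) :
    Gamma (((n : ℝ) + 1) / 2 + 1 / 2) ≤ 2 * √π *
      exp (((n : ℝ) + 1) / 2 * (log (((n : ℝ) + 1) / 2) - 1) - 1 / (8 * (((n : ℝ) + 1) / 2))) := by
  induction n using Nat.twoStepInduction with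
  | zero =>
    norm_num
    have h : exp (1 / 2 * (-log 2 - 1) - 1 / 4) = exp (- (3 / 4)) / √2 := by
      rw [show (1 / 2 * (-log 2 - 1) - 1 / 4 : ℝ) = -(3/4) - log 2 / 2 by ring, exp_sub,
        ← log_sqrt (by norm_num), exp_log (by positivity)]
    rw [one_div, log_inv, ← one_div, h]
    have h2 : √2 ≤ 1.42 := by
      rw [sqrt_le_left (by norm_num)]
      norm_num
    have h3 : 1.7 ≤ √π := by
      apply le_sqrt_of_sq_le
      linarith [pi_gt_three]
    have h4 : exp (3 / 4 : ℝ) ≤ 2.2 := by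
      refine le_of_pow_le_pow_left₀ (n := 4) (by norm_num) (by norm_num) ?_
      rw [← exp_nat_mul]
      have : exp (((4 : ℕ) : ℝ) * (3 / 4)) = exp 1 ^ 3 := by
        rw [← exp_nat_mul]
        norm_num
      rw [this]
      calc exp 1 ^ 3 ≤ (2.7182818286 : ℝ) ^ 3 := by
            gcongr
            exact exp_one_lt_d9.le
        _ ≤ _ := by norm_num
    have h5 : 0 < √2 := by positivity
    have h6 := exp_pos (3 / 4 : ℝ)
    rw [exp_neg]
    have : 2 * √π * ((exp (3 / 4))⁻¹ / √2) = 2 * √π / (exp (3 / 4) * √2) := by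
      field_simp
    rw [this, le_div_iff₀ (by positivity)]
    nlinarith [mul_le_mul h4 h2 h5.le (by norm_num)]
  | one =>
    have e : Gamma (((1 : ℕ) + 1 : ℝ) / 2 + 1 / 2) = √π / 2 := by
      rw [show ((1 : ℕ) + 1 : ℝ) / 2 + 1 / 2 = 1 / 2 + 1 by norm_num, Gamma_add_one (by norm_num),
        Gamma_one_half_eq]
      ring
    rw [e]
    norm_num
    have h4 : exp (9 / 8 : ℝ) ≤ 4 := by
      refine le_of_pow_le_pow_left₀ (n := 8) (by norm_num) (by norm_num) ?_
      rw [← exp_nat_mul]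
      have : exp (((8 : ℕ) : ℝ) * (9 / 8)) = exp 1 ^ 9 := by
        rw [← exp_nat_mul]
        norm_num
      rw [this]
      calc exp 1 ^ 9 ≤ (2.7182818286 : ℝ) ^ 9 := by
            gcongr
            exact exp_one_lt_d9.le
        _ ≤ _ := by norm_num
    have h5 : (1 : ℝ) / 4 ≤ exp (-(9 / 8)) := by
      rw [exp_neg, one_div]
      exact inv_anti₀ (exp_pos _) h4
    have h6 : 0 < √π := by positivity
    nlinarith
  | more n ih _ =>
    have := ptb_gamma_step (((n : ℝ) + 1) / 2) (by positivity) ih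
    have e : ((n + 2 : ℕ) + 1 : ℝ) / 2 = ((n : ℝ) + 1) / 2 + 1 := by
      push_cast
      ring
    rw [e]
    exact this

lemma ptb_gamma' (d : ℕ) (hd : 1 ≤ d) :
    Gamma ((d : ℝ) / 2 + 1 / 2) ≤ 2 * √π * (d / (2 * exp 1)) ^ ((d : ℝ) / 2) := by
  obtain ⟨n, rfl⟩ := Nat.exists_eq_add_of_le' hd
  have h := ptb_gamma n
  push_cast
  refine h.trans ?_
  have hp : (0 : ℝ) < ((n : ℝ) + 1) / 2 := by positivity
  rw [rpow_def_of_pos (by positivity),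
    show ((n : ℝ) + 1) / (2 * exp 1) = (((n : ℝ) + 1) / 2) / exp 1 by field_simp,
    log_div hp.ne' (exp_ne_zero 1), log_exp]
  gcongr
  have : 0 ≤ 1 / (8 * (((n : ℝ) + 1) / 2)) := by positivity
  linarith

/-- **Polynomial-tail integral bound.** For `a ≥ 2d`,
`(λ/(2π))^{d/2} ∫_{ℝ^d} (1+‖x‖)^{−a} dx ≤ 2 ((4/e)·d·λ/a²)^{d/2}`. -/
theorem polynomial_tail_bound (d : ℕ) (hd : 1 ≤ d) (lam a : ℝ) (hlam : 0 < lam)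
    (ha : 2 * d ≤ a) :
    (lam / (2 * π)) ^ ((d : ℝ) / 2) *
        ∫ x : EuclideanSpace ℝ (Fin d), (1 + ‖x‖) ^ (-a) ≤
      2 * ((4 / Real.exp 1) * d * lam / a ^ 2) ^ ((d : ℝ) / 2) := by
  have hd0 : (0 : ℝ) < d := by exact_mod_cast hd
  have ha0 : 0 < a := by linarith
  have : Nonempty (Fin d) := ⟨⟨0, hd⟩⟩
  have hpolar := integral_fun_norm_addHaar (volume : Measure (EuclideanSpace ℝ (Fin d)))
    (fun y : ℝ => (1 + y) ^ (-a))
  have hvol : (volume : Measure (EuclideanSpace ℝ (Fin d))).real (Metric.ball 0 1) =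
      √π ^ d / Gamma (d / 2 + 1) := by
    rw [Measure.real, EuclideanSpace.volume_ball]
    have : 0 ≤ √π ^ d / Gamma ((d : ℝ) / 2 + 1) := by
      have := Gamma_pos_of_pos (s := (d : ℝ) / 2 + 1) (by positivity)
      positivity
    simp [ENNReal.toReal_ofReal this]
  have hJ := ptb_bound (a / 2) (by positivity) (d - 1) a (by
    have : ((d - 1 : ℕ) : ℝ) = d - 1 := by simp [Nat.cast_sub hd]
    rw [this]; linarith)
  rw [Nat.sub_add_cancel hd] at hJ
  have hfac : ((d - 1).factorial : ℝ) = Gamma d := by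
    have := Gamma_nat_eq_factorial (d - 1)
    rw [← this]
    congr 1
    simp [Nat.cast_sub hd]
  rw [hfac] at hJ
  have hdup := Gamma_mul_Gamma_add_half ((d : ℝ) / 2)
  rw [show 2 * ((d : ℝ) / 2) = d by ring] at hdup
  have hG := ptb_gamma' d hd
  have hg0 := Gamma_pos_of_pos (s := (d : ℝ) / 2) (by positivity)
  rw [hpolar, hvol, finrank_euclideanSpace, Fintype.card_fin, Gamma_add_one (by positivity)]
  simp only [nsmul_eq_mul, smul_eq_mul]
  have hpi : (0 : ℝ) < √π := by positivity
  have htwo : (2 : ℝ) ^ (1 - (d : ℝ)) = 2 / 2 ^ d := by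
    rw [rpow_sub (by norm_num), rpow_one, rpow_natCast]
  have hGd : Gamma (d : ℝ) =
      Gamma ((d : ℝ) / 2) * Gamma ((d : ℝ) / 2 + 1 / 2) * 2 ^ d / (2 * √π) := by
    rw [hdup, htwo]
    field_simp
  have hsq : ∀ t : ℝ, 0 ≤ t → t ^ d = (t ^ 2) ^ ((d : ℝ) / 2) := by
    intro t ht
    rw [← rpow_natCast, ← rpow_natCast, ← rpow_mul ht]
    congr 1
    push_cast
    ring
  calc _ ≤ (lam / (2 * π)) ^ ((d : ℝ) / 2) * (d * (√π ^ d / (d / 2 * Gamma ((d : ℝ) / 2)) *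
        (Gamma d / (a / 2) ^ d))) := by gcongr
    _ = (lam / (2 * π)) ^ ((d : ℝ) / 2) * √π ^ d * (2 / a) ^ d * 2 ^ d *
        (Gamma ((d : ℝ) / 2 + 1 / 2) / √π) := by
        rw [hGd, div_pow, div_pow]
        field_simp
    _ ≤ (lam / (2 * π)) ^ ((d : ℝ) / 2) * √π ^ d * (2 / a) ^ d * 2 ^ d *
        ((2 * √π * (d / (2 * exp 1)) ^ ((d : ℝ) / 2)) / √π) := by gcongr
    _ = 2 * ((lam / (2 * π)) ^ ((d : ℝ) / 2) * √π ^ d * (2 / a) ^ d * 2 ^ d *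
        (d / (2 * exp 1)) ^ ((d : ℝ) / 2)) := by
        field_simp
    _ = _ := by
        rw [hsq (√π) hpi.le, hsq (2 / a) (by positivity), hsq 2 (by norm_num),
          ← mul_rpow (by positivity) (by positivity), ← mul_rpow (by positivity) (by positivity),
          ← mul_rpow (by positivity) (by positivity), ← mul_rpow (by positivity) (by positivity),
          sq_sqrt pi_pos.le]
        congr 2
        field_simp
        ring
end
end

section
/- Let d ≥ 1 be an integer. (i) For every real a ≥ 2d one has Γ(a−d)/Γ(a) ≤ (2/a)^d, equivalently Γ(a) ≥ (a/2)^d·Γ(a−d). (ii) One has Γ(d)/Γ(d/2) ≤ (2d/e)^{d/2}. -/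
open Real

noncomputable section

lemma gr_aux1 (d : ℕ) (a : ℝ) (hd : 1 ≤ d) (h : 2 * (d : ℝ) ≤ a) (k : ℕ) (hk : k ≤ d) :
    (a / 2) ^ k * Real.Gamma (a - k) ≤ Real.Gamma a := by
  have hd' : (1 : ℝ) ≤ d := by exact_mod_cast hd
  induction k with
  | zero => simp
  | succ k ih =>
    have hk' : ((k + 1 : ℕ) : ℝ) ≤ d := by exact_mod_cast hk
    refine le_trans ?_ (ih (by omega))
    push_cast at hk' ⊢
    have hpos : 0 < a - (k + 1) := by linarith
    have e : a - k = (a - (k + 1)) + 1 := by ring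
    rw [e, Real.Gamma_add_one hpos.ne', pow_succ, mul_assoc]
    have hG := Real.Gamma_pos_of_pos hpos
    have h2 : a / 2 ≤ a - (k + 1) := by linarith
    have : 0 ≤ a / 2 := by linarith
    gcongr

/-- Upper Stirling bound. -/
lemma gr_fact (n : ℕ) (hn : 1 ≤ n) :
    (n.factorial : ℝ) ≤ Real.exp 1 * √n * (n / Real.exp 1) ^ n := by
  have h := Stirling.stirlingSeq'_antitone (Nat.zero_le (n - 1))
  simp only [Function.comp, Nat.succ_eq_add_one, Nat.sub_add_cancel hn, zero_add,
    Stirling.stirlingSeq_one] at h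
  have hn' : (0 : ℝ) < n := by exact_mod_cast hn
  unfold Stirling.stirlingSeq at h
  rw [div_le_iff₀ (by positivity), Real.sqrt_mul (by norm_num)] at h
  have h2 : (√2 : ℝ) ≠ 0 := by positivity
  refine h.trans_eq ?_
  field_simp

lemma gr_even (n : ℕ) (hn : 1 ≤ n) :
    ((2 * n).factorial : ℝ) ≤ 2 * n.factorial * (4 * n / Real.exp 1) ^ n := by
  have h := Stirling.stirlingSeq'_antitone (show n - 1 ≤ 2 * n - 1 by omega)
  simp only [Function.comp, Nat.succ_eq_add_one, Nat.sub_add_cancel hn,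
    Nat.sub_add_cancel (show 1 ≤ 2 * n by omega)] at h
  have hn' : (0 : ℝ) < n := by exact_mod_cast hn
  unfold Stirling.stirlingSeq at h
  rw [div_le_iff₀ (by positivity)] at h
  refine h.trans ?_
  push_cast
  have e1 : √(2 * (2 * (n : ℝ))) = √2 * √(2 * n) := Real.sqrt_mul (by norm_num) _
  have e2 : (2 * (n : ℝ) / Real.exp 1) ^ (2 * n) =
      (4 * n / Real.exp 1) ^ n * (n / Real.exp 1) ^ n := by
    rw [pow_mul, ← mul_pow]; congr 1; field_simp; ring
  have h2 : √2 ≤ 2 := by rw [Real.sqrt_le_left (by norm_num)]; norm_num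
  rw [e1, e2]
  have e3 : (n.factorial : ℝ) / (√(2 * n) * (n / Real.exp 1) ^ n) *
      (√2 * √(2 * n) * ((4 * n / Real.exp 1) ^ n * (n / Real.exp 1) ^ n))
      = √2 * n.factorial * (4 * n / Real.exp 1) ^ n := by
    have : √(2 * (n : ℝ)) ≠ 0 := by positivity
    have : ((n : ℝ) / Real.exp 1) ^ n ≠ 0 := by positivity
    generalize ((n : ℝ) / Real.exp 1) ^ n = x at *
    generalize (4 * (n : ℝ) / Real.exp 1) ^ n = y at *
    field_simp
  rw [e3]
  gcongr

lemma gr_odd (n : ℕ) :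
    4 ^ n * (n.factorial : ℝ) / √π ≤
      ((4 * n + 2) / Real.exp 1) ^ n * √((4 * n + 2) / Real.exp 1) := by
  have hlt := Real.exp_one_lt_d9
  have hpi := Real.pi_gt_three
  have he := Real.exp_pos 1
  rw [div_le_iff₀ (by positivity)]
  rcases Nat.eq_zero_or_pos n with rfl | hn
  · simp only [pow_zero, Nat.factorial_zero, Nat.cast_one, one_mul, Nat.cast_zero, mul_zero,
      zero_add]
    rw [← Real.sqrt_mul (by positivity), Real.one_le_sqrt, div_mul_eq_mul_div, le_div_iff₀ he]
    linarith
  have hn' : (0 : ℝ) < n := by exact_mod_cast hn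
  have h1 : (3 / 2 : ℝ) * (4 * n / Real.exp 1) ^ n ≤ ((4 * n + 2) / Real.exp 1) ^ n := by
    have hb := one_add_mul_le_pow (show (-2 : ℝ) ≤ 1 / (2 * n) by
      have : (0 : ℝ) ≤ 1 / (2 * n) := by positivity
      linarith) n
    have e : (n : ℝ) * (1 / (2 * n)) = 1 / 2 := by field_simp
    have e' : (4 * (n : ℝ) + 2) / Real.exp 1 = (1 + 1 / (2 * n)) * (4 * n / Real.exp 1) := by
      field_simp; ring
    rw [e', mul_pow]
    gcongr
    linarith
  have h2 : Real.exp 1 * √n ≤ (3 / 2) * (√((4 * n + 2) / Real.exp 1) * √π) := by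
    rw [← Real.sqrt_mul (by positivity)]
    refine (sq_le_sq₀ (by positivity) (by positivity)).mp ?_
    rw [mul_pow, mul_pow, Real.sq_sqrt hn'.le, Real.sq_sqrt (by positivity),
      div_mul_eq_mul_div, mul_div_assoc', le_div_iff₀ he]
    have h3 : Real.exp 1 ^ 3 ≤ 27 := by
      have : Real.exp 1 ^ 3 ≤ 3 ^ 3 := by gcongr; linarith
      linarith
    nlinarith [mul_le_mul_of_nonneg_right h3 hn'.le, mul_le_mul_of_nonneg_left hpi.le hn'.le]
  calc 4 ^ n * (n.factorial : ℝ) ≤ 4 ^ n * (Real.exp 1 * √n * (n / Real.exp 1) ^ n) := by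
        gcongr; exact gr_fact n hn
    _ = (4 * n / Real.exp 1) ^ n * (Real.exp 1 * √n) := by
        rw [mul_div_assoc, mul_pow]; ring
    _ ≤ (4 * n / Real.exp 1) ^ n * ((3 / 2) * (√((4 * n + 2) / Real.exp 1) * √π)) := by
        gcongr
    _ = ((3 / 2 : ℝ) * (4 * n / Real.exp 1) ^ n) * √((4 * n + 2) / Real.exp 1) * √π := by ring
    _ ≤ _ := by gcongr

lemma gr_two (d : ℕ) (hd : 1 ≤ d) :
    Real.Gamma d / Real.Gamma (d / 2) ≤ (2 * d / Real.exp 1) ^ ((d : ℝ) / 2) := by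
  obtain ⟨n, rfl | rfl⟩ := Nat.even_or_odd' d
  · have hn : 1 ≤ n := by omega
    have hn' : (0 : ℝ) < n := by exact_mod_cast hn
    have h := gr_even n hn
    have g1 := Real.Gamma_nat_eq_factorial n
    have g2 := Real.Gamma_nat_eq_factorial (2 * n)
    rw [Real.Gamma_add_one (by positivity)] at g1 g2
    push_cast at g1 g2 ⊢
    have e : 2 * (n : ℝ) / 2 = n := by ring
    rw [e, Real.rpow_natCast, div_le_iff₀ (Real.Gamma_pos_of_pos hn')]
    rw [← g1, ← g2] at h
    have e2 : 2 * (2 * (n : ℝ)) = 4 * n := by ring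
    rw [e2]
    have : 2 * (n : ℝ) * Real.Gamma (2 * n) ≤
      2 * n * ((4 * n / Real.exp 1) ^ n * Real.Gamma n) := by linarith
    exact le_of_mul_le_mul_left this (by positivity)
  · have h := gr_odd n
    have hG := Real.Gamma_mul_Gamma_add_half ((n : ℝ) + 1 / 2)
    have e1 : (n : ℝ) + 1 / 2 + 1 / 2 = n + 1 := by ring
    have e2 : 2 * ((n : ℝ) + 1 / 2) = 2 * n + 1 := by ring
    have e3 : 1 - (2 * (n : ℝ) + 1) = -((2 * n : ℕ) : ℝ) := by push_cast; ring
    rw [e1, e2, e3, Real.rpow_neg (by norm_num), Real.rpow_natCast, pow_mul,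
      Real.Gamma_nat_eq_factorial] at hG
    norm_num at hG
    push_cast
    have e4 : (2 * (n : ℝ) + 1) / 2 = n + 1 / 2 := by ring
    have e5 : 2 * (2 * (n : ℝ) + 1) = 4 * n + 2 := by ring
    rw [e4, e5, Real.rpow_add (by positivity), Real.rpow_natCast, ← Real.sqrt_eq_rpow]
    refine le_trans (le_of_eq ?_) h
    have hp : 0 < Real.Gamma ((n : ℝ) + 1 / 2) := Real.Gamma_pos_of_pos (by positivity)
    have hs : 0 < √π := by positivity
    rw [div_eq_div_iff hp.ne' hs.ne']
    have h4 : (4 : ℝ) ^ n ≠ 0 := by positivity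
    field_simp at hG ⊢
    linarith

/-- **Gamma-function ratio bounds.**
(i) For every real `a ≥ 2d`, `Γ(a−d)/Γ(a) ≤ (2/a)^d`, equivalently
    `Γ(a) ≥ (a/2)^d · Γ(a−d)`.
(ii) `Γ(d)/Γ(d/2) ≤ (2d/e)^{d/2}`. -/
theorem gamma_ratio_bounds (d : ℕ) (hd : 1 ≤ d) :
    (∀ a : ℝ, 2 * d ≤ a →
        Real.Gamma (a - d) / Real.Gamma a ≤ (2 / a) ^ d ∧
          (a / 2) ^ d * Real.Gamma (a - d) ≤ Real.Gamma a) ∧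
      Real.Gamma d / Real.Gamma (d / 2) ≤ (2 * d / Real.exp 1) ^ ((d : ℝ) / 2) := by
  refine ⟨fun a ha => ?_, gr_two d hd⟩
  have h := gr_aux1 d a hd ha d le_rfl
  refine ⟨?_, h⟩
  have hd' : (1 : ℝ) ≤ d := by exact_mod_cast hd
  have ha0 : 0 < a := by linarith
  rw [div_le_iff₀ (Real.Gamma_pos_of_pos ha0)]
  calc Real.Gamma (a - d) = (2 / a) ^ d * ((a / 2) ^ d * Real.Gamma (a - d)) := by
        rw [← mul_assoc, ← mul_pow]
        have : 2 / a * (a / 2) = 1 := by field_simp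
        rw [this]; simp
    _ ≤ _ := by gcongr
end
end

section
/- Let d ≥ 2 be an integer, λ > 0, and let κ, R > 0 satisfy 0 < κ ≤ 1/e and κR ≥ 2. Set ε = d/λ. Then (λ/(2π))^{d/2} ∫_{‖x‖ ≥ R√ε} exp(−κ·√(λd)·‖x‖) dx ≤ exp(−d·(κR − 1/2 − log R)). -/
open MeasureTheory Real

noncomputable section

theorem gauss_ball_aux (d : ℕ) (b r : ℝ) (hb : 0 < b) (hr : 0 ≤ r) :
    (volume : Measure (EuclideanSpace ℝ (Fin d))).real (Metric.ball 0 1) * r ^ d *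
      Real.exp (-(b * r ^ 2)) ≤ (π / b) ^ ((d : ℝ) / 2) := by
  have hG := GaussianFourier.integral_rexp_neg_mul_sq_norm (V := EuclideanSpace ℝ (Fin d)) hb
  have hpos : 0 < (π / b) ^ ((d : ℝ) / 2) := by positivity
  rw [finrank_euclideanSpace, Fintype.card_fin] at hG
  have hint : Integrable (fun v : EuclideanSpace ℝ (Fin d) => Real.exp (-b * ‖v‖ ^ 2)) := by
    by_contra h
    rw [integral_undef h] at hG
    exact hpos.ne hG
  have hball : (volume : Measure (EuclideanSpace ℝ (Fin d))).real (Metric.closedBall 0 r) =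
      r ^ d * (volume : Measure (EuclideanSpace ℝ (Fin d))).real (Metric.ball 0 1) := by
    rw [Measure.addHaar_real_closedBall _ _ hr, finrank_euclideanSpace, Fintype.card_fin]
  rw [← hG]
  calc _ = ∫ v in Metric.closedBall (0 : EuclideanSpace ℝ (Fin d)) r,
        Real.exp (-(b * r ^ 2)) := by
        rw [setIntegral_const, hball, smul_eq_mul]; ring
    _ ≤ ∫ v in Metric.closedBall (0 : EuclideanSpace ℝ (Fin d)) r,
        Real.exp (-b * ‖v‖ ^ 2) := by
        apply setIntegral_mono_on
        · exact integrableOn_const (by exact measure_closedBall_lt_top.ne)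
        · exact hint.integrableOn
        · exact measurableSet_closedBall
        · intro x hx
          have hx' : ‖x‖ ≤ r := by simpa using hx
          apply Real.exp_le_exp.2
          have : ‖x‖ ^ 2 ≤ r ^ 2 := by gcongr
          nlinarith
    _ ≤ _ := setIntegral_le_integral hint (Filter.Eventually.of_forall fun x => (Real.exp_pos _).le)

theorem radial_aux (d : ℕ) (hd : 1 ≤ d) (c s : ℝ) (hs : 0 < s) (hc : 2 * d ≤ c * s) :
    ∫ y in Set.Ici s, y ^ (d - 1) * Real.exp (-(c * y)) ≤
      s ^ d * Real.exp (-(c * s)) / d := by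
  have hd0 : (1 : ℝ) ≤ d := by exact_mod_cast hd
  set a : ℝ := c - d / s with ha
  have has : a * s = c * s - d := by rw [ha]; field_simp
  have ha0 : 0 < a := by
    by_contra h
    have : a * s ≤ 0 := mul_nonpos_of_nonpos_of_nonneg (not_lt.1 h) hs.le
    linarith
  have hI : IntegrableOn (fun y : ℝ => Real.exp (-a * y)) (Set.Ioi s) :=
    integrableOn_exp_mul_Ioi (by linarith) s
  have hV : ∫ y in Set.Ioi s, Real.exp (-a * y) = Real.exp (-(a * s)) / a := by
    rw [integral_exp_mul_Ioi (by linarith)]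
    rw [neg_div_neg_eq, neg_mul]
  rw [integral_Ici_eq_integral_Ioi]
  calc _ ≤ ∫ y in Set.Ioi s, (s ^ (d - 1) * Real.exp (-d)) * Real.exp (-a * y) := by
        apply integral_mono_of_nonneg
        · filter_upwards [ae_restrict_mem measurableSet_Ioi] with y hy
          have : 0 < y := hs.trans hy
          simp only [Pi.zero_apply]
          positivity
        · exact hI.const_mul _
        · filter_upwards [ae_restrict_mem measurableSet_Ioi] with y hy
          have hy' : s < y := hy
          have hy0 : 0 < y := hs.trans hy
          have h1 : y / s ≤ Real.exp (y / s - 1) := by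
            have := Real.add_one_le_exp (y / s - 1); linarith
          have h1' : 1 ≤ y / s := by rw [le_div_iff₀ hs]; linarith
          have h2 : (y / s) ^ (d - 1) ≤ Real.exp (d * (y / s - 1)) := by
            calc (y / s) ^ (d - 1) ≤ (y / s) ^ d := pow_le_pow_right₀ h1' (by omega)
              _ ≤ (Real.exp (y / s - 1)) ^ d := by gcongr
              _ = _ := by rw [← Real.exp_nat_mul]
          have h3 : y ^ (d - 1) = s ^ (d - 1) * (y / s) ^ (d - 1) := by
            rw [← mul_pow]; congr 1; field_simp
          change y ^ (d - 1) * Real.exp (-(c * y)) ≤ _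
          rw [h3, mul_assoc, mul_assoc]
          refine mul_le_mul_of_nonneg_left ?_ (by positivity)
          calc _ ≤ Real.exp (d * (y / s - 1)) * Real.exp (-(c * y)) := by gcongr
            _ = _ := by
              rw [← Real.exp_add, ← Real.exp_add]; congr 1; rw [ha]; ring
    _ = s ^ (d - 1) * Real.exp (-(c * s)) / a := by
        rw [integral_const_mul, hV, has, mul_assoc, ← mul_div_assoc, ← Real.exp_add,
          ← mul_div_assoc]
        congr 3; ring
    _ ≤ _ := by
        have h4 : s ^ d = s ^ (d - 1) * s := by rw [← pow_succ]; congr 1; omega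
        rw [h4, div_le_div_iff₀ ha0 (by linarith)]
        have h5 : (d : ℝ) ≤ s * a := by linarith [mul_comm a s]
        calc _ ≤ s ^ (d - 1) * Real.exp (-(c * s)) * (s * a) := by gcongr
          _ = _ := by ring

/-- **Exponential-tail integral bound.** For `d ≥ 2`, `0 < κ ≤ 1/e`, `κR ≥ 2` and `ε = d/λ`,
`(λ/(2π))^{d/2} ∫_{‖x‖ ≥ R√ε} exp(−κ√(λd)‖x‖) dx ≤ exp(−d(κR − 1/2 − log R))`. -/
theorem exponential_tail_bound (d : ℕ) (hd : 2 ≤ d) (lam κ R : ℝ) (hlam : 0 < lam)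
    (hκ0 : 0 < κ) (hκ : κ ≤ 1 / Real.exp 1) (hR : 0 < R) (hκR : 2 ≤ κ * R) :
    (lam / (2 * π)) ^ ((d : ℝ) / 2) *
        ∫ x in {x : EuclideanSpace ℝ (Fin d) | R * Real.sqrt ((d : ℝ) / lam) ≤ ‖x‖},
          Real.exp (-(κ * Real.sqrt (lam * d) * ‖x‖)) ≤
      Real.exp (-(d * (κ * R - 1 / 2 - Real.log R))) := by
  have hd0 : (0 : ℝ) < d := by exact_mod_cast (by omega : 0 < d)
  have : Nonempty (Fin d) := ⟨⟨0, by omega⟩⟩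
  have : Nontrivial (EuclideanSpace ℝ (Fin d)) := by
    apply Module.nontrivial_of_finrank_pos (R := ℝ)
    rw [finrank_euclideanSpace, Fintype.card_fin]; omega
  set r := Real.sqrt ((d : ℝ) / lam) with hr
  set c := κ * Real.sqrt (lam * d) with hc
  set ω := (volume : Measure (EuclideanSpace ℝ (Fin d))).real (Metric.ball 0 1) with hω
  have hr0 : 0 < r := by positivity
  have hr2 : r ^ 2 = d / lam := Real.sq_sqrt (by positivity)
  have hcs : c * (R * r) = κ * R * d := by
    have : Real.sqrt (lam * d) * r = d := by
      rw [hr, ← Real.sqrt_mul (by positivity), show lam * d * (d / lam) = (d : ℝ) ^ 2 by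
        field_simp, Real.sqrt_sq hd0.le]
    rw [hc]; linear_combination κ * R * this
  have hs0 : 0 < R * r := by positivity
  have hω0 : 0 ≤ ω := measureReal_nonneg
  have hpolar : ∫ x in {x : EuclideanSpace ℝ (Fin d) | R * r ≤ ‖x‖}, Real.exp (-(c * ‖x‖)) =
      d * ω * ∫ y in Set.Ici (R * r), y ^ (d - 1) * Real.exp (-(c * y)) := by
    have h := integral_fun_norm_addHaar (volume : Measure (EuclideanSpace ℝ (Fin d)))
      ((Set.Ici (R * r)).indicator fun y => Real.exp (-(c * y)))
    rw [finrank_euclideanSpace, Fintype.card_fin] at h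
    have hm : MeasurableSet {x : EuclideanSpace ℝ (Fin d) | R * r ≤ ‖x‖} :=
      measurableSet_le measurable_const measurable_norm
    rw [← integral_indicator hm]
    have e1 : ({x : EuclideanSpace ℝ (Fin d) | R * r ≤ ‖x‖}.indicator
        fun x => Real.exp (-(c * ‖x‖))) =
        fun x => (Set.Ici (R * r)).indicator (fun y => Real.exp (-(c * y))) ‖x‖ := by
      ext x; simp [Set.indicator_apply]
    rw [e1, h]
    have e2 : (fun y : ℝ => y ^ (d - 1) • (Set.Ici (R * r)).indicator
        (fun y => Real.exp (-(c * y))) y) =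
        (Set.Ici (R * r)).indicator (fun y => y ^ (d - 1) * Real.exp (-(c * y))) := by
      ext y; simp [Set.indicator_apply]
    rw [e2, setIntegral_indicator measurableSet_Ici,
      Set.inter_eq_right.2 (Set.Ici_subset_Ioi.2 hs0)]
    simp [hω, mul_assoc]
  have hrad := radial_aux d (by omega) c (R * r) hs0 (by rw [hcs]; nlinarith)
  have hg := gauss_ball_aux d (lam / 2) r (by positivity) hr0.le
  rw [hr2, show lam / 2 * ((d : ℝ) / lam) = d / 2 by field_simp] at hg
  have hinv : (lam / (2 * π)) ^ ((d : ℝ) / 2) * (π / (lam / 2)) ^ ((d : ℝ) / 2) = 1 := by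
    rw [← Real.mul_rpow (by positivity) (by positivity),
      show lam / (2 * π) * (π / (lam / 2)) = 1 by field_simp, Real.one_rpow]
  have hg' : ω * r ^ d ≤ (π / (lam / 2)) ^ ((d : ℝ) / 2) * Real.exp (d / 2) := by
    calc ω * r ^ d = ω * r ^ d * Real.exp (-(d / 2)) * Real.exp (d / 2) := by
          rw [mul_assoc, ← Real.exp_add]; simp
      _ ≤ _ := by gcongr
  have hRd : R ^ d = Real.exp (d * Real.log R) := by
    rw [Real.exp_nat_mul, Real.exp_log hR]
  rw [hpolar]
  set A := (lam / (2 * π)) ^ ((d : ℝ) / 2) with hA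
  have hA0 : 0 ≤ A := by positivity
  calc _ ≤ A * (d * ω * ((R * r) ^ d * Real.exp (-(c * (R * r))) / d)) := by gcongr
    _ = A * (ω * r ^ d) * (R ^ d * Real.exp (-(κ * R * d))) := by
        rw [hcs, mul_pow]; field_simp
    _ ≤ A * ((π / (lam / 2)) ^ ((d : ℝ) / 2) * Real.exp (d / 2)) *
        (R ^ d * Real.exp (-(κ * R * d))) := by gcongr
    _ = Real.exp (d / 2) * (R ^ d * Real.exp (-(κ * R * d))) := by
        rw [← mul_assoc A, hinv, one_mul]
    _ = _ := by
        rw [hRd, ← Real.exp_add, ← Real.exp_add]; congr 1; ring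
end
end

section
/- Let d ≥ 1 be an integer, λ > 0, and let κ, R > 0 satisfy 0 < κ ≤ 1/e, κR ≥ 2, and (κR)² ≥ 16·log(1/κ). Set ε = d/λ. Then (λ/(2π))^{d/2} ∫_{‖x‖ ≥ R√ε} exp(−λκ‖x‖²/2) dx ≤ exp(−d·(κR)²/16). -/
open MeasureTheory Real

noncomputable section

/-- **Gaussian-tail integral bound.** For `0 < κ ≤ 1/e`, `κR ≥ 2`, `(κR)² ≥ 16 log(1/κ)`
and `ε = d/λ`,
`(λ/(2π))^{d/2} ∫_{‖x‖ ≥ R√ε} exp(−λκ‖x‖²/2) dx ≤ exp(−d(κR)²/16)`. -/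
theorem gaussian_tail_bound (d : ℕ) (hd : 1 ≤ d) (lam κ R : ℝ) (hlam : 0 < lam)
    (hκ0 : 0 < κ) (hκ : κ ≤ 1 / Real.exp 1) (hR : 0 < R) (hκR : 2 ≤ κ * R)
    (hκR2 : 16 * Real.log (1 / κ) ≤ (κ * R) ^ 2) :
    (lam / (2 * π)) ^ ((d : ℝ) / 2) *
        ∫ x in {x : EuclideanSpace ℝ (Fin d) | R * Real.sqrt ((d : ℝ) / lam) ≤ ‖x‖},
          Real.exp (-(lam * κ * ‖x‖ ^ 2 / 2)) ≤
      Real.exp (-(d * (κ * R) ^ 2 / 16)) := by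
  have hb : 0 < lam * κ / 4 := by positivity
  have hd0 : (0 : ℝ) < d := by exact_mod_cast hd
  have hI := GaussianFourier.integral_rexp_neg_mul_sq_norm
    (V := EuclideanSpace ℝ (Fin d)) hb
  rw [finrank_euclideanSpace_fin] at hI
  have hint : Integrable (fun x : EuclideanSpace ℝ (Fin d) =>
      Real.exp (-(lam * κ / 4) * ‖x‖ ^ 2)) := by
    apply Integrable.of_integral_ne_zero
    rw [hI]
    positivity
  set S := {x : EuclideanSpace ℝ (Fin d) | R * Real.sqrt ((d : ℝ) / lam) ≤ ‖x‖} with hS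
  have hSm : MeasurableSet S := measurableSet_le measurable_const measurable_norm
  have h1 : ∫ x in S, Real.exp (-(lam * κ * ‖x‖ ^ 2 / 2)) ≤
      ∫ x in S, Real.exp (-(κ * R ^ 2 * d / 4)) * Real.exp (-(lam * κ / 4) * ‖x‖ ^ 2) := by
    apply integral_mono_of_nonneg
    · exact Filter.Eventually.of_forall fun x => (Real.exp_pos _).le
    · exact (hint.const_mul _).integrableOn
    · refine (ae_restrict_iff' hSm).2 (Filter.Eventually.of_forall fun x hx => ?_)
      have hx' : R * Real.sqrt ((d : ℝ) / lam) ≤ ‖x‖ := hx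
      have h2 : (R * Real.sqrt ((d : ℝ) / lam)) ^ 2 ≤ ‖x‖ ^ 2 := by gcongr
      rw [mul_pow, Real.sq_sqrt (by positivity)] at h2
      have h3 : lam * κ / 4 * (R ^ 2 * (d / lam)) ≤ lam * κ / 4 * ‖x‖ ^ 2 := by gcongr
      have h4 : lam * κ / 4 * (R ^ 2 * (d / lam)) = κ * R ^ 2 * d / 4 := by
        field_simp
      simp only
      rw [← Real.exp_add]
      apply Real.exp_le_exp.2
      linarith
  have h2 : ∫ x in S, Real.exp (-(κ * R ^ 2 * d / 4)) * Real.exp (-(lam * κ / 4) * ‖x‖ ^ 2) ≤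
      Real.exp (-(κ * R ^ 2 * d / 4)) * (π / (lam * κ / 4)) ^ ((d : ℝ) / 2) := by
    rw [← hI, ← integral_const_mul]
    exact setIntegral_le_integral (hint.const_mul _)
      (Filter.Eventually.of_forall fun x => by positivity)
  have hlog : 1 ≤ Real.log (1 / κ) := by
    rw [Real.le_log_iff_exp_le (by positivity)]
    rw [le_div_iff₀ (Real.exp_pos _)] at hκ
    rw [le_div_iff₀ hκ0]
    linarith
  have hκ1 : κ ≤ 1 := hκ.trans (by
    rw [div_le_one (Real.exp_pos _)]
    exact Real.one_le_exp zero_le_one)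
  have hu : (κ * R) ^ 2 ≤ κ * R ^ 2 := by
    have : κ * (κ * R ^ 2) ≤ 1 * (κ * R ^ 2) := by gcongr
    linarith [this, (by ring : (κ * R) ^ 2 = κ * (κ * R ^ 2))]
  have hlog2 : Real.log (2 / κ) = Real.log 2 + Real.log (1 / κ) := by
    rw [← Real.log_mul (by norm_num) (by positivity)]
    congr 1
    ring
  have hl2 : Real.log 2 ≤ 1 := by linarith [Real.log_two_lt_d9]
  calc _ ≤ (lam / (2 * π)) ^ ((d : ℝ) / 2) *
        (Real.exp (-(κ * R ^ 2 * d / 4)) * (π / (lam * κ / 4)) ^ ((d : ℝ) / 2)) := by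
        gcongr
        exact h1.trans h2
    _ = Real.exp (-(κ * R ^ 2 * d / 4)) * (2 / κ) ^ ((d : ℝ) / 2) := by
        rw [mul_left_comm, ← Real.mul_rpow (by positivity) (by positivity)]
        congr 2
        field_simp
        norm_num
    _ = Real.exp (-(κ * R ^ 2 * d / 4) + Real.log (2 / κ) * ((d : ℝ) / 2)) := by
        rw [Real.exp_add, Real.rpow_def_of_pos (by positivity)]
    _ ≤ _ := by
        apply Real.exp_le_exp.2
        have : (d : ℝ) * ((κ * R) ^ 2 / 16 + Real.log (2 / κ) / 2) ≤ d * (κ * R ^ 2 / 4) := by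
          gcongr
          linarith
        linarith
end
end

section
/- There exist absolute constants c ∈ (0,1) and C > 0 such that for every integer d ≥ 4 and every real λ ≥ 3 satisfying log λ ≤ d and d³ ≤ c·λ², one has |log((λ/(2π))^{d/2} ∫_{ℝ^d} exp(−λ·(‖x‖²/2 + ‖x‖⁴/24)) dx) + d²/(24λ) + d/(12λ)| ≤ C·d³/λ². -/
open MeasureTheory Real

noncomputable section

theorem qe_radial (d : ℕ) (hd : 4 ≤ d) (b : ℝ) (k : ℕ) (y : ℝ) (hy : 0 < y) :
    y ^ (d - 1) • (y ^ k * Real.exp (-b * y ^ 2)) =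
      y ^ ((d : ℝ) - 1 + k) * Real.exp (-b * y ^ (2 : ℝ)) := by
  have h1 : (d : ℝ) - 1 + k = ((d - 1 + k : ℕ) : ℝ) := by
    push_cast [Nat.cast_sub (show 1 ≤ d by omega)]; ring
  rw [h1, Real.rpow_natCast, pow_add, smul_eq_mul, Real.rpow_two]; ring

theorem qe_integrable (d : ℕ) (hd : 4 ≤ d) (b : ℝ) (hb : 0 < b) (k : ℕ) :
    Integrable (fun x : EuclideanSpace ℝ (Fin d) => ‖x‖ ^ k * Real.exp (-b * ‖x‖ ^ 2)) := by
  haveI : Nontrivial (EuclideanSpace ℝ (Fin d)) := by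
    apply Module.nontrivial_of_finrank_pos (R := ℝ)
    simp; omega
  have hd' : (4 : ℝ) ≤ d := by exact_mod_cast hd
  have hk : (0 : ℝ) ≤ k := Nat.cast_nonneg k
  rw [integrable_fun_norm_addHaar (volume : Measure (EuclideanSpace ℝ (Fin d)))
    (f := fun r : ℝ => r ^ k * Real.exp (-b * r ^ 2))]
  rw [finrank_euclideanSpace_fin]
  rw [integrableOn_congr_fun (show Set.EqOn _ (fun y : ℝ => y ^ ((d : ℝ) - 1 + k) *
    Real.exp (-b * y ^ (2 : ℝ))) (Set.Ioi 0) from fun y hy => qe_radial d hd b k y hy)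
    measurableSet_Ioi]
  exact integrableOn_rpow_mul_exp_neg_mul_rpow (by linarith) (by norm_num) hb

theorem qe_moment (d : ℕ) (hd : 4 ≤ d) (b : ℝ) (hb : 0 < b) (k : ℕ) :
    ∫ x : EuclideanSpace ℝ (Fin d), ‖x‖ ^ (k + 2) * Real.exp (-b * ‖x‖ ^ 2) =
      ((d : ℝ) + k) / (2 * b) *
        ∫ x : EuclideanSpace ℝ (Fin d), ‖x‖ ^ k * Real.exp (-b * ‖x‖ ^ 2) := by
  haveI : Nontrivial (EuclideanSpace ℝ (Fin d)) := by
    apply Module.nontrivial_of_finrank_pos (R := ℝ)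
    simp; omega
  have hd' : (4 : ℝ) ≤ d := by exact_mod_cast hd
  have key : ∀ j : ℕ, ∫ x : EuclideanSpace ℝ (Fin d), ‖x‖ ^ j * Real.exp (-b * ‖x‖ ^ 2) =
      d * ((volume : Measure (EuclideanSpace ℝ (Fin d))).real (Metric.ball 0 1) *
        (b ^ (-((d : ℝ) - 1 + j + 1) / 2) * (1 / 2) * Real.Gamma (((d : ℝ) - 1 + j + 1) / 2))) := by
    intro j
    have hj : (0 : ℝ) ≤ j := Nat.cast_nonneg j
    rw [integral_fun_norm_addHaar (volume : Measure (EuclideanSpace ℝ (Fin d)))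
      (fun r : ℝ => r ^ j * Real.exp (-b * r ^ 2))]
    rw [finrank_euclideanSpace_fin,
      setIntegral_congr_fun measurableSet_Ioi (fun y hy => qe_radial d hd b j y hy),
      integral_rpow_mul_exp_neg_mul_rpow (by norm_num) (by linarith) hb]
    simp only [nsmul_eq_mul, smul_eq_mul]
  have hk : (0 : ℝ) ≤ k := Nat.cast_nonneg k
  rw [key, key]
  have e1 : ((d : ℝ) - 1 + ((k + 2 : ℕ) : ℝ) + 1) / 2 = ((d : ℝ) - 1 + k + 1) / 2 + 1 := by
    push_cast; ring
  have e2 : -((d : ℝ) - 1 + ((k + 2 : ℕ) : ℝ) + 1) / 2 = -((d : ℝ) - 1 + k + 1) / 2 - 1 := by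
    push_cast; ring
  rw [e1, e2, Real.Gamma_add_one (by linarith), Real.rpow_sub_one hb.ne']
  field_simp
  ring

theorem qe_exp_bound (u : ℝ) (hu : u ≤ 1) : Real.exp u ≤ 1 + u + u ^ 2 := by
  rcases le_or_gt (-1) u with h | h
  · have := Real.abs_exp_sub_one_sub_id_le (abs_le.2 ⟨h, hu⟩)
    have := (abs_le.1 this).2
    linarith
  · have : Real.exp u ≤ 1 := Real.exp_le_one_iff.2 (by linarith)
    nlinarith

theorem qe_normalize (d : ℕ) (lam b : ℝ) (hl : 0 < lam) (hb : 0 < b) :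
    (lam / (2 * π)) ^ ((d : ℝ) / 2) *
      ∫ x : EuclideanSpace ℝ (Fin d), Real.exp (-b * ‖x‖ ^ 2) =
    (lam / (2 * b)) ^ ((d : ℝ) / 2) := by
  have hpi := Real.pi_pos
  rw [GaussianFourier.integral_rexp_neg_mul_sq_norm hb, finrank_euclideanSpace_fin,
    ← Real.mul_rpow (by positivity) (by positivity)]
  congr 1
  field_simp

theorem qe_poly (d : ℕ) (hd : 4 ≤ d) (lam : ℝ) (hl : 0 < lam) (A B D : ℝ) :
    Integrable (fun x : EuclideanSpace ℝ (Fin d) =>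
      (A + B * ‖x‖ ^ 4 + D * ‖x‖ ^ 8) * Real.exp (-(lam / 2) * ‖x‖ ^ 2)) ∧
    (lam / (2 * π)) ^ ((d : ℝ) / 2) * ∫ x : EuclideanSpace ℝ (Fin d),
      (A + B * ‖x‖ ^ 4 + D * ‖x‖ ^ 8) * Real.exp (-(lam / 2) * ‖x‖ ^ 2) =
    A + B * (d * (d + 2) / lam ^ 2) + D * (d * (d + 2) * (d + 4) * (d + 6) / lam ^ 4) := by
  have hb : 0 < lam / 2 := by positivity
  have e : (fun x : EuclideanSpace ℝ (Fin d) =>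
      (A + B * ‖x‖ ^ 4 + D * ‖x‖ ^ 8) * Real.exp (-(lam / 2) * ‖x‖ ^ 2)) =
      fun x => A * (‖x‖ ^ 0 * Real.exp (-(lam / 2) * ‖x‖ ^ 2)) +
        B * (‖x‖ ^ 4 * Real.exp (-(lam / 2) * ‖x‖ ^ 2)) +
        D * (‖x‖ ^ 8 * Real.exp (-(lam / 2) * ‖x‖ ^ 2)) := by
    funext x; ring
  have i0 := (qe_integrable d hd _ hb 0).const_mul A
  have i4 := (qe_integrable d hd _ hb 4).const_mul B
  have i8 := (qe_integrable d hd _ hb 8).const_mul D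
  have i04 : Integrable (fun x : EuclideanSpace ℝ (Fin d) =>
      A * (‖x‖ ^ 0 * Real.exp (-(lam / 2) * ‖x‖ ^ 2)) +
        B * (‖x‖ ^ 4 * Real.exp (-(lam / 2) * ‖x‖ ^ 2))) := i0.add i4
  rw [e]
  refine ⟨i04.add i8, ?_⟩
  rw [integral_add i04 i8, integral_add i0 i4]
  simp only [integral_const_mul]
  have m0 : (lam / (2 * π)) ^ ((d : ℝ) / 2) *
      ∫ x : EuclideanSpace ℝ (Fin d), ‖x‖ ^ 0 * Real.exp (-(lam / 2) * ‖x‖ ^ 2) = 1 := by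
    simp only [pow_zero, one_mul]
    rw [qe_normalize d lam _ hl hb, show lam / (2 * (lam / 2)) = 1 by field_simp, Real.one_rpow]
  have m2 := qe_moment d hd _ hb 0
  have m4 := qe_moment d hd _ hb 2
  have m6 := qe_moment d hd _ hb 4
  have m8 := qe_moment d hd _ hb 6
  norm_num only at m2 m4 m6 m8
  rw [m8, m6, m4, m2]
  generalize (∫ x : EuclideanSpace ℝ (Fin d), ‖x‖ ^ 0 * Real.exp (-(lam / 2) * ‖x‖ ^ 2)) = I at *
  generalize (lam / (2 * π)) ^ ((d : ℝ) / 2) = N at *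
  have hI : N * (A * I + B * ((d + 2) / lam * ((d + 0) / lam * I)) +
      D * ((d + 6) / lam * ((d + 4) / lam * ((d + 2) / lam * ((d + 0) / lam * I))))) =
      (N * I) * (A + B * (d * (d + 2) / lam ^ 2) +
        D * (d * (d + 2) * (d + 4) * (d + 6) / lam ^ 4)) := by
    field_simp
    ring
  rw [m0, one_mul] at hI
  rw [← hI]
  rw [show 2 * (lam / 2) = lam by ring]

set_option maxHeartbeats 1000000 in
/-- **Quartic-exponent example.** There are absolute constants `c ∈ (0,1)` and `C > 0` such
that for all integers `d ≥ 4` and reals `λ ≥ 3` with `log λ ≤ d` and `d³ ≤ cλ²`,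
`|log((λ/(2π))^{d/2} ∫ exp(−λ(‖x‖²/2 + ‖x‖⁴/24)) dx) + d²/(24λ) + d/(12λ)| ≤ C d³/λ²`. -/
theorem quartic_example :
    ∃ c C : ℝ, 0 < c ∧ c < 1 ∧ 0 < C ∧
      ∀ (d : ℕ), 4 ≤ d → ∀ lam : ℝ, 3 ≤ lam → Real.log lam ≤ d →
        (d : ℝ) ^ 3 ≤ c * lam ^ 2 →
        |Real.log ((lam / (2 * π)) ^ ((d : ℝ) / 2) *
              ∫ x : EuclideanSpace ℝ (Fin d),
                Real.exp (-(lam * (‖x‖ ^ 2 / 2 + ‖x‖ ^ 4 / 24)))) +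
            (d : ℝ) ^ 2 / (24 * lam) + (d : ℝ) / (12 * lam)| ≤
          C * (d : ℝ) ^ 3 / lam ^ 2 := by
  refine ⟨1 / 2, 1, by norm_num, by norm_num, by norm_num, ?_⟩
  intro d hd lam hlam _ _
  have hl : 0 < lam := by linarith
  have hd' : (4 : ℝ) ≤ d := by exact_mod_cast hd
  have hpi := Real.pi_pos
  have hN : 0 < (lam / (2 * π)) ^ ((d : ℝ) / 2) := by positivity
  set N := (lam / (2 * π)) ^ ((d : ℝ) / 2) with hNdef
  have hF : ∀ r : ℝ, Real.exp (-(lam * (r ^ 2 / 2 + r ^ 4 / 24))) =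
      Real.exp (-(lam / 24 * r ^ 4)) * Real.exp (-(lam / 2) * r ^ 2) := by
    intro r; rw [← Real.exp_add]; congr 1; ring
  have hFi : Integrable (fun x : EuclideanSpace ℝ (Fin d) =>
      Real.exp (-(lam * (‖x‖ ^ 2 / 2 + ‖x‖ ^ 4 / 24)))) := by
    have h0 := qe_integrable d hd (lam / 2) (by positivity) 0
    refine h0.mono' (by fun_prop) (Filter.Eventually.of_forall fun x => ?_)
    rw [Real.norm_eq_abs, abs_of_pos (Real.exp_pos _), pow_zero, one_mul]
    apply Real.exp_le_exp.2
    have : 0 ≤ lam * ‖x‖ ^ 4 := by positivity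
    linarith
  set m : ℝ := d * (d + 2) / (24 * lam) with hm
  have hmeq : (d : ℝ) ^ 2 / (24 * lam) + (d : ℝ) / (12 * lam) = m := by
    rw [hm]; field_simp; ring
  rw [add_assoc, hmeq]
  set Z := N * ∫ x : EuclideanSpace ℝ (Fin d),
    Real.exp (-(lam * (‖x‖ ^ 2 / 2 + ‖x‖ ^ 4 / 24))) with hZ
  -- lower bound
  have low : Real.exp (-m) ≤ Z := by
    obtain ⟨hi, he⟩ := qe_poly d hd lam hl (Real.exp (-m) * (1 + m))
      (-(Real.exp (-m) * (lam / 24))) 0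
    have : Real.exp (-m) * (1 + m) +
        -(Real.exp (-m) * (lam / 24)) * ((d : ℝ) * (d + 2) / lam ^ 2) +
        0 * (d * (d + 2) * (d + 4) * (d + 6) / lam ^ 4) = Real.exp (-m) := by
      rw [hm]; field_simp; ring
    rw [this] at he
    rw [← he, hZ]
    refine mul_le_mul_of_nonneg_left (integral_mono hi hFi fun x => ?_) hN.le
    simp only
    rw [hF]
    refine mul_le_mul_of_nonneg_right ?_ (Real.exp_pos _).le
    have h1 := Real.add_one_le_exp (m - lam / 24 * ‖x‖ ^ 4)
    have h2 : Real.exp (-(lam / 24 * ‖x‖ ^ 4)) =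
        Real.exp (-m) * Real.exp (m - lam / 24 * ‖x‖ ^ 4) := by
      rw [← Real.exp_add]; congr 1; ring
    rw [h2]
    have := mul_le_mul_of_nonneg_left h1 (Real.exp_pos (-m)).le
    linarith
  have hZpos : 0 < Z := (Real.exp_pos _).trans_le low
  have lowlog : -m ≤ Real.log Z := (Real.le_log_iff_exp_le hZpos).2 low
  have hRpos : 0 ≤ 1 * (d : ℝ) ^ 3 / lam ^ 2 := by positivity
  rw [abs_le]
  refine ⟨by linarith, ?_⟩
  rcases le_total ((d : ℝ) ^ 2) lam with hcase | hcase
  · -- large lam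
    have hm1 : m ≤ 1 := by
      rw [hm, div_le_one (by positivity)]; nlinarith
    obtain ⟨hi, he⟩ := qe_poly d hd lam hl (Real.exp (-m) * (1 + m + m ^ 2))
      (-(Real.exp (-m) * (lam / 24 * (1 + 2 * m)))) (Real.exp (-m) * (lam / 24) ^ 2)
    have hup : Z ≤ Real.exp (-m) * (1 + d * (d + 2) * (8 * d + 24) / (576 * lam ^ 2)) := by
      have : Real.exp (-m) * (1 + d * (d + 2) * (8 * d + 24) / (576 * lam ^ 2)) =
          Real.exp (-m) * (1 + m + m ^ 2) +
          -(Real.exp (-m) * (lam / 24 * (1 + 2 * m))) * ((d : ℝ) * (d + 2) / lam ^ 2) +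
          Real.exp (-m) * (lam / 24) ^ 2 *
            (d * (d + 2) * (d + 4) * (d + 6) / lam ^ 4) := by
        rw [hm]; field_simp; ring
      rw [this, ← he, hZ]
      refine mul_le_mul_of_nonneg_left (integral_mono hFi hi fun x => ?_) hN.le
      simp only
      rw [hF]
      refine mul_le_mul_of_nonneg_right ?_ (Real.exp_pos _).le
      have h0 : 0 ≤ lam / 24 * ‖x‖ ^ 4 := by positivity
      have h1 := qe_exp_bound (m - lam / 24 * ‖x‖ ^ 4) (by linarith)
      have h2 : Real.exp (-(lam / 24 * ‖x‖ ^ 4)) =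
          Real.exp (-m) * Real.exp (m - lam / 24 * ‖x‖ ^ 4) := by
        rw [← Real.exp_add]; congr 1; ring
      rw [h2]
      refine (mul_le_mul_of_nonneg_left h1 (Real.exp_pos (-m)).le).trans (le_of_eq ?_)
      ring
    have hlog := Real.log_le_log hZpos hup
    rw [Real.log_mul (Real.exp_pos _).ne' (by positivity), Real.log_exp] at hlog
    have hl1 := Real.log_le_sub_one_of_pos
      (show 0 < 1 + (d : ℝ) * (d + 2) * (8 * d + 24) / (576 * lam ^ 2) by positivity)
    have hfin : (d : ℝ) * (d + 2) * (8 * d + 24) / (576 * lam ^ 2) ≤ 1 * (d : ℝ) ^ 3 / lam ^ 2 := by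
      rw [div_le_div_iff₀ (by positivity) (by positivity)]
      have : (d : ℝ) * (d + 2) * (8 * d + 24) ≤ 576 * d ^ 3 := by
        have : ((d : ℝ) + 2) * (8 * d + 24) ≤ 576 * d ^ 2 := by nlinarith
        nlinarith
      nlinarith [sq_nonneg lam]
    linarith
  · -- small lam
    have hb : 0 < lam / 2 + d / 12 := by positivity
    have hi := (qe_integrable d hd _ hb 0).const_mul (Real.exp ((d : ℝ) ^ 2 / (24 * lam)))
    have he := qe_normalize d lam _ hl hb
    have hup : Z ≤ Real.exp ((d : ℝ) ^ 2 / (24 * lam)) *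
        (lam / (2 * (lam / 2 + d / 12))) ^ ((d : ℝ) / 2) := by
      rw [← he, hZ, mul_left_comm]
      refine mul_le_mul_of_nonneg_left ?_ hN.le
      rw [← integral_const_mul]
      simp only [pow_zero, one_mul] at hi
      refine integral_mono hFi hi fun x => ?_
      simp only
      rw [← Real.exp_add]
      apply Real.exp_le_exp.2
      have h1 : 0 ≤ lam / 24 * (‖x‖ ^ 2 - d / lam) ^ 2 := by positivity
      have h2 : lam / 24 * (‖x‖ ^ 2 - d / lam) ^ 2 =
          lam / 24 * ‖x‖ ^ 4 - d / 12 * ‖x‖ ^ 2 + (d : ℝ) ^ 2 / (24 * lam) := by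
        field_simp; ring
      nlinarith
    have hlog := Real.log_le_log hZpos hup
    rw [Real.log_mul (Real.exp_pos _).ne' (by positivity), Real.log_exp,
      Real.log_rpow (by positivity)] at hlog
    have hinv : lam / (2 * (lam / 2 + d / 12)) = (1 + (d : ℝ) / (6 * lam))⁻¹ := by
      field_simp; ring
    rw [hinv, Real.log_inv] at hlog
    set t : ℝ := (d : ℝ) / (6 * lam) with ht
    have htpos : 0 < t := by positivity
    have hl1 := Real.le_log_one_add_of_nonneg htpos.le
    have hl2 : t - t ^ 2 / 2 ≤ 2 * t / (t + 2) := by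
      rw [le_div_iff₀ (by positivity)]
      nlinarith [pow_pos htpos 3]
    have hl3 : (d : ℝ) / 2 * (t - t ^ 2 / 2) ≤ d / 2 * Real.log (1 + t) :=
      mul_le_mul_of_nonneg_left (hl2.trans hl1) (by positivity)
    have hfin : (d : ℝ) ^ 2 / (24 * lam) - d / 2 * (t - t ^ 2 / 2) + m
        = d / (12 * lam) + d ^ 3 / (144 * lam ^ 2) := by
      rw [ht, hm]; field_simp; ring
    have hA : (d : ℝ) / (12 * lam) ≤ d ^ 3 / (12 * lam ^ 2) := by
      rw [div_le_div_iff₀ (by positivity) (by positivity)]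
      have : (d : ℝ) * lam * lam ≤ d * lam * d ^ 2 :=
        mul_le_mul_of_nonneg_left hcase (by positivity)
      linarith
    have hB : (d : ℝ) ^ 3 / (12 * lam ^ 2) + d ^ 3 / (144 * lam ^ 2) ≤ 1 * d ^ 3 / lam ^ 2 := by
      have h : (0 : ℝ) ≤ d ^ 3 / lam ^ 2 := by positivity
      have e1 : (d : ℝ) ^ 3 / (12 * lam ^ 2) = (d ^ 3 / lam ^ 2) / 12 := by field_simp
      have e2 : (d : ℝ) ^ 3 / (144 * lam ^ 2) = (d ^ 3 / lam ^ 2) / 144 := by field_simp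
      rw [e1, e2, one_mul]; linarith
    linarith
end
end
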